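/- arXiv:2008.02722 — 8 statements merged into one kernel-verified Lean document; each statement's English description precedes it below -/
import Mathlib

section
/- Let k ∈ ℕ, let m_0, …, m_k be positive natural numbers and a_0, …, a_k ∈ ℤ. There exists a nonprincipal ultrafilter F on ℕ such that {x ∈ ℕ : (m_i : ℤ) ∣ ((x : ℤ) − a_i)} ∈ F for every i ≤ k if and only if there exists x ∈ ℕ such that (m_i : ℤ) ∣ ((x : ℤ) − a_i) for every i ≤ k. -/
/-!
A set belonging to an ultrafilter is nonempty, and finitely many members of it intersect in a
member, so an ultrafilter solution yields a natural solution. Conversely, if `x` is a natural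
solution and `M` is the product of the moduli, then `M > 0` and every term of the progression
`x + M * t` is again a solution; the pushforward of a nonprincipal ultrafilter along the injective
map `t ↦ x + M * t` is then a nonprincipal ultrafilter containing every solution set.
-/

/-- A finite system of congruences `x ≡ a i (mod m i)`, `i ≤ k`, has a
solution among nonprincipal ultrafilters on ℕ iff it has a solution in ℕ. -/
theorem finite_congruence_system_ultrafilter_solution_iff_nat_solution
    (k : ℕ) (m : ℕ → ℕ) (a : ℕ → ℤ) (hm : ∀ i ≤ k, 0 < m i) :
    (∃ F : Ultrafilter ℕ, (∀ n : ℕ, F ≠ pure n) ∧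
        ∀ i ≤ k, {x : ℕ | (m i : ℤ) ∣ ((x : ℤ) - a i)} ∈ F) ↔
      ∃ x : ℕ, ∀ i ≤ k, (m i : ℤ) ∣ ((x : ℤ) - a i) := by
  constructor
  · rintro ⟨F, -, hF⟩
    have h : ∀ᶠ x : ℕ in (F : Filter ℕ), ∀ i ∈ Set.Iic k, (m i : ℤ) ∣ ((x : ℤ) - a i) :=
      (Filter.eventually_all_finite (Set.finite_Iic k)).2 hF
    exact h.exists
  · rintro ⟨x, hx⟩
    set M : ℕ := ∏ i ∈ Finset.range (k + 1), m i with hM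
    have hMpos : 0 < M :=
      Finset.prod_pos fun i hi => hm i (Nat.lt_succ_iff.1 (Finset.mem_range.1 hi))
    have hinj : Function.Injective fun t : ℕ => x + M * t := fun s t h =>
      Nat.eq_of_mul_eq_mul_left hMpos (Nat.add_left_cancel h)
    refine ⟨(Filter.hyperfilter ℕ).map fun t => x + M * t, fun n hn => ?_, fun i hi => ?_⟩
    · have hmem : ({n} : Set ℕ) ∈ (Filter.hyperfilter ℕ).map fun t => x + M * t := by
        rw [hn]
        exact Ultrafilter.mem_pure.2 rfl
      -- By injectivity the preimage of `{n}` is finite, hence not in the hyperfilter.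
      exact ((Set.finite_singleton n).preimage hinj.injOn).notMem_hyperfilter
        (Ultrafilter.mem_map.1 hmem)
    · refine Ultrafilter.mem_map.2 (Filter.univ_mem' fun t => ?_)
      have hdvd : (m i : ℤ) ∣ (M : ℤ) := Int.natCast_dvd_natCast.2
        (Finset.dvd_prod_of_mem m (Finset.mem_range.2 (Nat.lt_succ_of_le hi)))
      have hsum := dvd_add (hx i hi) (hdvd.mul_right (t : ℤ))
      change (m i : ℤ) ∣ (((x + M * t : ℕ) : ℤ) - a i)
      have heq : (((x + M * t : ℕ) : ℤ) - a i) = ((x : ℤ) - a i) + (M : ℤ) * (t : ℤ) := by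
        rw [Nat.cast_add, Nat.cast_mul]
        ring
      rwa [heq]
end

section
/- Let G be an ultrafilter on ℕ, and for every prime p and every n ≥ 1 let r(p,n) be the unique residue with 0 ≤ r(p,n) < p^n and {x ∈ ℕ : x ≡ r(p,n) (mod p^n)} ∈ G. Assume the set T = {p : p prime and r(p,n) ≠ 0 for some n ≥ 1} is infinite. Then there exists an ultrafilter F₀ on ℕ such that: (i) L_l ∉ F₀ for every l ∈ ℕ; and (ii) every ultrafilter F on ℕ with F =~ F₀ satisfies {x ∈ ℕ : x ≡ r(p,n) (mod p^n)} ∈ F for every prime p and every n ≥ 1. -/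
/-!
An ultrafilter `F₀` containing a divisibility antichain `A` is alone in its `=~`-class: every
subset of `A` is the difference of two upward closed sets, and `=~`-equivalent ultrafilters agree
on these. So it suffices to find an infinite antichain `x 0, x 1, …` whose members satisfy more and
more of the congruences prescribed by `G` and have more and more prime factors; any nonprincipal
ultrafilter concentrated on it will do.

The antichain is built recursively. Given a stage `N`, take a prime `q > N` with `r q n ≠ 0` for
some `n`. By the Chinese remainder theorem there is a large `x` satisfying the congruences for
`p, n ≤ N` and divisible by a high power of `q`. Any later number satisfying the congruence
modulo `q ^ n` is not divisible by `q ^ n`, hence not by `x`, and it cannot divide `x` because it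
is larger. Infinitude of `T` supplies such a `q` at every stage.
-/

/-- `F ∣~ G`: every member of `F` that is nonempty and upward closed under
divisibility belongs to `G`. -/
def UfDvd (F G : Ultrafilter ℕ) : Prop :=
  ∀ A : Set ℕ, A ∈ F → A.Nonempty → (∀ a ∈ A, ∀ b, a ∣ b → b ∈ A) → A ∈ G

/-- `F =~ G`: mutual `∣~`-divisibility. -/
def UfEq (F G : Ultrafilter ℕ) : Prop :=
  UfDvd F G ∧ UfDvd G F

/-- An ultrafilter containing a divisibility antichain is determined by its `=~`-class. -/
lemma mem_of_ufEq_of_antichain {F F₀ : Ultrafilter ℕ} (h : UfEq F F₀) {A : Set ℕ}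
    (hA : A ∈ F₀) (hanti : ∀ a ∈ A, ∀ b ∈ A, a ∣ b → a = b) {S : Set ℕ} (hS : S ∈ F₀) :
    S ∈ F := by
  have hB : S ∩ A ∈ F₀ := Filter.inter_mem hS hA
  set U : Set ℕ := {b | ∃ a ∈ S ∩ A, a ∣ b} with hU
  have hBU : S ∩ A ⊆ U := fun a ha => ⟨a, ha, dvd_rfl⟩
  have hUF : U ∈ F := by
    refine h.2 U (Filter.mem_of_superset hB hBU)
      ((F₀.nonempty_of_mem hB).mono hBU) ?_
    rintro a ⟨c, hc, hca⟩ b hab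
    exact ⟨c, hc, hca.trans hab⟩
  by_contra hSF
  have hBF : S ∩ A ∉ F := fun hb => hSF (Filter.mem_of_superset hb Set.inter_subset_left)
  have hV : U ∩ (S ∩ A)ᶜ ∈ F :=
    Filter.inter_mem hUF (Ultrafilter.compl_mem_iff_notMem.2 hBF)
  have hV₀ : U ∩ (S ∩ A)ᶜ ∈ F₀ := by
    refine h.1 _ hV (F.nonempty_of_mem hV) ?_
    rintro a ⟨⟨c, hc, hca⟩, haB⟩ b hab
    refine ⟨⟨c, hc, hca.trans hab⟩, fun hb => haB ?_⟩
    -- `c ∣ a ∣ b` with `c, b` in the antichain forces `a = c`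
    have hcb : c = b := hanti c hc.2 b hb.2 (hca.trans hab)
    subst hcb
    rwa [Nat.dvd_antisymm hab hca]
  obtain ⟨z, hz, hzV⟩ := F₀.nonempty_of_mem (Filter.inter_mem hB hV₀)
  exact hzV.2 hz

/-- `x` satisfies the prescribed congruences modulo `p ^ n` for all `p, n ≤ N`. -/
def GoodUpTo (r : ℕ → ℕ → ℕ) (N x : ℕ) : Prop :=
  ∀ p ≤ N, ∀ n ≤ N, p.Prime → 1 ≤ n → x ≡ r p n [MOD p ^ n]

lemma GoodUpTo.mono {r : ℕ → ℕ → ℕ} {M N x : ℕ} (h : GoodUpTo r N x) (hMN : M ≤ N) :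
    GoodUpTo r M x :=
  fun p hp n hn => h p (hp.trans hMN) n (hn.trans hMN)

lemma exists_goodUpTo (G : Ultrafilter ℕ) (r : ℕ → ℕ → ℕ)
    (hG : ∀ p n : ℕ, p.Prime → 1 ≤ n → {x : ℕ | x ≡ r p n [MOD p ^ n]} ∈ G) (N : ℕ) :
    ∃ y, GoodUpTo r N y := by
  have h : ∀ᶠ y in (G : Filter ℕ), GoodUpTo r N y := by
    unfold GoodUpTo
    refine (Filter.eventually_all_finite (Set.finite_Iic N)).2 fun p _ => ?_
    refine (Filter.eventually_all_finite (Set.finite_Iic N)).2 fun n _ => ?_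
    by_cases hp : p.Prime
    · by_cases hn : 1 ≤ n
      · filter_upwards [hG p n hp hn] with y hy _ _ using hy
      · exact Filter.Eventually.of_forall fun y _ h => absurd h hn
    · exact Filter.Eventually.of_forall fun y h => absurd h hp
  exact h.exists

/-- One step of the recursive construction of the antichain: `x` is the new member, and `M` is a
stage beyond which no number satisfying the congruences is divisible by `x`. -/
lemma exists_step (G : Ultrafilter ℕ) (r : ℕ → ℕ → ℕ)
    (hr : ∀ p n : ℕ, p.Prime → 1 ≤ n → r p n < p ^ n)
    (hG : ∀ p n : ℕ, p.Prime → 1 ≤ n → {x : ℕ | x ≡ r p n [MOD p ^ n]} ∈ G)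
    (hT : {p : ℕ | p.Prime ∧ ∃ n : ℕ, 1 ≤ n ∧ r p n ≠ 0}.Infinite) (N : ℕ) :
    ∃ x M : ℕ, N < x ∧ x < M ∧ GoodUpTo r N x ∧ N ≤ x.primeFactorsList.length ∧
      ∀ y, GoodUpTo r M y → ¬ x ∣ y := by
  obtain ⟨q, ⟨hq, n, hn, hrn⟩, hNq⟩ := hT.exists_gt N
  obtain ⟨y, hy⟩ := exists_goodUpTo G r hG N
  have hcop : Nat.Coprime (N.factorial ^ N) (q ^ (n + N)) := by
    apply Nat.Coprime.pow
    exact (hq.coprime_factorial_of_lt hNq).symm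
  obtain ⟨z, hz1, hz2⟩ := Nat.chineseRemainder hcop y 0
  set P := N.factorial ^ N * q ^ (n + N) with hP
  have hPpos : 0 < P := Nat.mul_pos (pow_pos N.factorial_pos N) (pow_pos hq.pos _)
  -- the added multiple of both moduli makes the solution larger than `N`, hence nonzero
  set x := z + P * (N + 1) with hx
  have hNx : N < x := by nlinarith
  have hqx : q ^ (n + N) ∣ x :=
    dvd_add ((Nat.modEq_zero_iff_dvd).1 hz2) ((Dvd.intro_left _ rfl : _ ∣ P).mul_right _)
  have hxy : x ≡ y [MOD N.factorial ^ N] := by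
    have : P * (N + 1) ≡ 0 [MOD N.factorial ^ N] :=
      (Nat.modEq_zero_iff_dvd).2 ((Dvd.intro _ rfl : _ ∣ P).mul_right _)
    simpa using hz1.add this
  refine ⟨x, x + q + n + 1, hNx, by omega, ?_, ?_, ?_⟩
  · intro p hp m hm hpp hm1
    refine (hxy.of_dvd ?_).trans (hy p hp m hm hpp hm1)
    exact (pow_dvd_pow p hm).trans (pow_dvd_pow_of_dvd (Nat.dvd_factorial hpp.pos hp) N)
  · have h1 := (Nat.primeFactorsList_sublist_of_dvd hqx (by omega)).length_le
    rw [hq.primeFactorsList_pow, List.length_replicate] at h1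
    omega
  · intro w hw hxw
    have h1 := hw q (by omega) n (by omega) hq hn
    have h2 : q ^ n ∣ w := (pow_dvd_pow q (Nat.le_add_right n N)).trans (hqx.trans hxw)
    have h3 : q ^ n ∣ r q n := (Nat.modEq_zero_iff_dvd).1
      (h1.symm.trans ((Nat.modEq_zero_iff_dvd).2 h2))
    exact hrn (Nat.eq_zero_of_dvd_of_lt h3 (hr q n hq hn))

/-- If `G` is an ultrafilter on ℕ, `r p n` is the residue of `G` modulo
`p ^ n` for each prime `p` and `n ≥ 1`, and the set of primes `p` such that `r p n ≠ 0`
for some `n ≥ 1` is infinite, then there is an ultrafilter `F₀` containing no level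
`L_l` such that every ultrafilter `=~`-equivalent to `F₀` has residue `r p n`
modulo `p ^ n` for every prime `p` and every `n ≥ 1`. -/
theorem exists_class_outside_L_satisfying_maximal_system
    (G : Ultrafilter ℕ) (r : ℕ → ℕ → ℕ)
    (hr : ∀ p n : ℕ, p.Prime → 1 ≤ n → r p n < p ^ n)
    (hG : ∀ p n : ℕ, p.Prime → 1 ≤ n → {x : ℕ | x ≡ r p n [MOD p ^ n]} ∈ G)
    (hT : {p : ℕ | p.Prime ∧ ∃ n : ℕ, 1 ≤ n ∧ r p n ≠ 0}.Infinite) :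
    ∃ F₀ : Ultrafilter ℕ,
      (∀ l : ℕ, {x : ℕ | x.primeFactorsList.length = l} ∉ F₀) ∧
      ∀ F : Ultrafilter ℕ, UfEq F F₀ →
        ∀ p n : ℕ, p.Prime → 1 ≤ n → {x : ℕ | x ≡ r p n [MOD p ^ n]} ∈ F := by
  choose x M hNx hxM hgood hlen hdvd using exists_step G r hr hG hT
  -- `N k` is the stage at which the `k`-th member `x (N k)` of the antichain is chosen
  let N : ℕ → ℕ := fun k => M^[k] 0
  have hsucc : ∀ k, N (k + 1) = M (N k) := fun k => Function.iterate_succ_apply' M k 0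
  have hN : StrictMono N := strictMono_nat_of_lt_succ fun k => by
    rw [hsucc]; exact (hNx _).trans (hxM _)
  have hkN : ∀ k, k ≤ N k := hN.id_le
  have hlt : ∀ {j k}, j < k → M (N j) ≤ N k := fun {j k} h => by
    rw [← hsucc]; exact hN.monotone h
  have hanti : ∀ j k, x (N j) ∣ x (N k) → j = k := by
    intro j k h
    rcases lt_trichotomy j k with hjk | hjk | hjk
    · exact absurd h (hdvd _ _ ((hgood _).mono (hlt hjk)))
    · exact hjk
    · have h1 := Nat.le_of_dvd (by have := hNx (N k); omega) h
      have h2 := hxM (N k)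
      have h3 := hlt hjk
      have h4 := hNx (N j)
      omega
  let F₀ : Ultrafilter ℕ := Ultrafilter.of (Filter.map (fun k => x (N k)) Filter.atTop)
  have hF₀ : ∀ S : Set ℕ, (∀ᶠ k in Filter.atTop, x (N k) ∈ S) → S ∈ F₀ :=
    fun S hS => Ultrafilter.of_le _ hS
  refine ⟨F₀, fun l => ?_, fun F hF p n hp hn => ?_⟩
  · rw [← Ultrafilter.compl_mem_iff_notMem]
    refine hF₀ _ ?_
    filter_upwards [Filter.eventually_gt_atTop l] with k hk hk'
    have h1 := hlen (N k)
    have h2 := hkN k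
    have h3 : (x (N k)).primeFactorsList.length = l := hk'
    omega
  · refine mem_of_ufEq_of_antichain hF (A := Set.range fun k => x (N k))
      (hF₀ _ (Filter.Eventually.of_forall fun k => ⟨k, rfl⟩)) ?_ (hF₀ _ ?_)
    · rintro _ ⟨j, rfl⟩ _ ⟨k, rfl⟩ h
      exact congrArg (fun k => x (N k)) (hanti j k h)
    · filter_upwards [Filter.eventually_ge_atTop p, Filter.eventually_ge_atTop n] with k hpk hnk
      exact hgood (N k) p (hpk.trans (hkN k)) n (hnk.trans (hkN k)) hp hn
end

section
/- Let p be a prime and let S ⊆ {0, 1, …, p−1} be a geometric set of residues. Then there exists an ultrafilter F₀ on ℕ such that S = {t : 0 ≤ t < p and there exists an ultrafilter F on ℕ with F =~ F₀ and {x ∈ ℕ : x ≡ t (mod p)} ∈ F}. -/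
/-- `S` is a geometric set of residues modulo `p`: `S = {s·r^k mod p : k ∈ ℕ}` for some
`0 ≤ s < p` and `0 < r < p`. -/
def IsGeometricResidueSet (p : ℕ) (S : Set ℕ) : Prop :=
  ∃ s r : ℕ, s < p ∧ 0 < r ∧ r < p ∧ S = {t : ℕ | ∃ k : ℕ, t = s * r ^ k % p}

open Filter

/-- Up to `∣~`, the image of an ultrafilter along a divisibility chain does not depend on the
ultrafilter, as long as it is nonprincipal. -/
lemma ufDvd_map_of_le_atTop {f : ℕ → ℕ} (hf : ∀ i j, i ≤ j → f i ∣ f j) {U V : Ultrafilter ℕ}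
    (hV : (V : Filter ℕ) ≤ atTop) : UfDvd (U.map f) (V.map f) := by
  intro A hA _ hup
  rw [Ultrafilter.mem_map] at hA ⊢
  obtain ⟨i, hi⟩ := U.nonempty_of_mem hA
  exact hV (mem_of_superset (mem_atTop i) fun j hj => hup _ hi _ (hf i j hj))

lemma ufEq_map_of_le_atTop {f : ℕ → ℕ} (hf : ∀ i j, i ≤ j → f i ∣ f j) {U V : Ultrafilter ℕ}
    (hU : (U : Filter ℕ) ≤ atTop) (hV : (V : Filter ℕ) ≤ atTop) : UfEq (U.map f) (V.map f) :=
  ⟨ufDvd_map_of_le_atTop hf hV, ufDvd_map_of_le_atTop hf hU⟩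

/-- For `q` prime, the chain `{s * q ^ k}` is the intersection of an upward closed and a downward
closed set, so membership of the chain is invariant under `=~`. -/
lemma chain_mem_of_ufEq {s q : ℕ} (hq : q.Prime) {F U : Ultrafilter ℕ}
    (h : UfEq F (U.map fun k => s * q ^ k)) : {x : ℕ | ∃ k, x = s * q ^ k} ∈ F := by
  have hmul : {x : ℕ | s ∣ x} ∈ F := by
    refine h.2 _ ?_ ⟨s, dvd_rfl⟩ fun a ha b hab => dvd_trans ha hab
    rw [Ultrafilter.mem_map]
    exact univ_mem' fun k => dvd_mul_right s (q ^ k)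
  have hdiv : {x : ℕ | ∃ k, x ∣ s * q ^ k} ∈ F := by
    by_contra hD
    rw [← Ultrafilter.compl_mem_iff_notMem] at hD
    have hD' := h.1 _ hD (F.nonempty_of_mem hD)
      fun a ha b hab ⟨k, hk⟩ => ha ⟨k, hab.trans hk⟩
    rw [Ultrafilter.mem_map] at hD'
    obtain ⟨k, hk⟩ := U.nonempty_of_mem hD'
    exact hk ⟨k, dvd_rfl⟩
  filter_upwards [hmul, hdiv]
  rintro _ ⟨d, rfl⟩ ⟨k, hk⟩
  rcases Nat.eq_zero_or_pos s with rfl | hs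
  · exact ⟨0, by simp⟩
  · obtain ⟨j, _, rfl⟩ := (Nat.dvd_prime_pow hq).1 (Nat.dvd_of_mul_dvd_mul_left hs hk)
    exact ⟨j, rfl⟩

/-- For a prime `p`, every geometric set of residues `S` modulo `p` is the
set of residues modulo `p` realized by the ultrafilters in some `=~`-equivalence
class. -/
theorem geometric_residue_set_is_residue_set_of_some_class
    (p : ℕ) (hp : p.Prime) (S : Set ℕ) (hS : IsGeometricResidueSet p S) :
    ∃ F₀ : Ultrafilter ℕ,
      S = {t : ℕ | t < p ∧ ∃ F : Ultrafilter ℕ, UfEq F F₀ ∧ {x : ℕ | x ≡ t [MOD p]} ∈ F} := by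
  obtain ⟨s, r, -, hr0, hrp, rfl⟩ := hS
  have hrcop : r.Coprime p := (Nat.coprime_of_lt_prime hr0.ne' hrp hp).symm
  obtain ⟨q, -, hq, hqr⟩ := Nat.forall_exists_prime_gt_and_modEq 0 hp.ne_zero hrcop
  have hchain : ∀ i j, i ≤ j → s * q ^ i ∣ s * q ^ j :=
    fun i j hij => mul_dvd_mul_left s (pow_dvd_pow q hij)
  refine ⟨(hyperfilter ℕ).map fun k => s * q ^ k, Set.Subset.antisymm ?_ ?_⟩
  · rintro _ ⟨k, rfl⟩
    refine ⟨Nat.mod_lt _ hp.pos,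
      ((hyperfilter ℕ).map fun i => (p - 1) * i + k).map fun k => s * q ^ k, ?_, ?_⟩
    · refine ufEq_map_of_le_atTop hchain ?_ Nat.hyperfilter_le_atTop
      have ht : Tendsto (fun i => (p - 1) * i + k) atTop atTop :=
        tendsto_atTop_mono (fun i => (Nat.le_mul_of_pos_left i
          (Nat.sub_pos_of_lt hp.one_lt)).trans (Nat.le_add_right _ k)) tendsto_id
      exact ht.mono_left Nat.hyperfilter_le_atTop
    · rw [Ultrafilter.mem_map, Ultrafilter.mem_map]
      refine univ_mem' fun i => ?_
      have hfermat : r ^ (p - 1) ≡ 1 [MOD p] := by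
        simpa [Nat.totient_prime hp] using Nat.ModEq.pow_totient hrcop
      have hpow : q ^ ((p - 1) * i + k) ≡ r ^ k [MOD p] := by
        have h1 := (hqr.pow ((p - 1) * i + k))
        have h2 := (hfermat.pow i).mul_right (r ^ k)
        rw [one_pow, one_mul] at h2
        exact h1.trans (by rw [pow_add, pow_mul]; exact h2)
      exact (hpow.mul_left s).trans (Nat.mod_modEq _ _).symm
  · rintro t ⟨htp, F, hF, ht⟩
    obtain ⟨_, hx, j, rfl⟩ := F.nonempty_of_mem (inter_mem ht (chain_mem_of_ufEq hq hF))
    refine ⟨j, ?_⟩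
    have h : t ≡ s * r ^ j [MOD p] := (Nat.ModEq.symm hx).trans ((hqr.pow j).mul_left s)
    rwa [Nat.ModEq, Nat.mod_eq_of_lt htp] at h
end

section
/- Let p be a prime and let F₀ be an ultrafilter on ℕ. Then the set S = {t : 0 ≤ t < p and there exists an ultrafilter F on ℕ with F =~ F₀ and {x ∈ ℕ : x ≡ t (mod p)} ∈ F} is a geometric set of residues modulo p. -/
/-- `A` is convex for divisibility: it contains every number lying between two of its members.
Upward closed sets and downward closed sets are both convex. -/
def DvdConvex (A : Set ℕ) : Prop :=
  ∀ x ∈ A, ∀ z ∈ A, ∀ y, x ∣ y → y ∣ z → y ∈ A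

/-- The filter generated by the divisibility-convex members of `F₀`. -/
def classFilter (F₀ : Ultrafilter ℕ) : Filter ℕ where
  sets := {B | ∃ A ∈ F₀, DvdConvex A ∧ A ⊆ B}
  univ_sets := ⟨Set.univ, Filter.univ_mem, fun _ _ _ _ _ _ _ => trivial, subset_rfl⟩
  sets_of_superset := fun ⟨A, h, hA, hs⟩ hst => ⟨A, h, hA, hs.trans hst⟩
  inter_sets := by
    rintro B C ⟨A, h, hA, hs⟩ ⟨A', h', hA', hs'⟩
    exact ⟨A ∩ A', Filter.inter_mem h h',
      fun x hx z hz y hxy hyz => ⟨hA x hx.1 z hz.1 y hxy hyz, hA' x hx.2 z hz.2 y hxy hyz⟩,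
      Set.inter_subset_inter hs hs'⟩

lemma mem_classFilter {F₀ : Ultrafilter ℕ} {B : Set ℕ} :
    B ∈ classFilter F₀ ↔ ∃ A ∈ F₀, DvdConvex A ∧ A ⊆ B := Iff.rfl

lemma DvdConvex.mem_classFilter {F₀ : Ultrafilter ℕ} {A : Set ℕ} (hA : DvdConvex A)
    (h : A ∈ F₀) : A ∈ classFilter F₀ := ⟨A, h, hA, subset_rfl⟩

lemma le_classFilter (F₀ : Ultrafilter ℕ) : (F₀ : Filter ℕ) ≤ classFilter F₀ :=
  fun _ ⟨_, h, _, hs⟩ => Filter.mem_of_superset h hs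

lemma dvdConvex_of_upper {A : Set ℕ} (h : ∀ a ∈ A, ∀ b, a ∣ b → b ∈ A) : DvdConvex A :=
  fun x hx _ _ y hxy _ => h x hx y hxy

lemma dvdConvex_compl_of_upper {A : Set ℕ} (h : ∀ a ∈ A, ∀ b, a ∣ b → b ∈ A) : DvdConvex Aᶜ :=
  fun _ _ z hz y _ hyz hy => hz (h y hy z hyz)

/-- A convex set is the intersection of its upward and its downward closure; membership of the
latter is decided by the upward closed complement. -/
lemma ufEq_iff {F F₀ : Ultrafilter ℕ} : UfEq F F₀ ↔ (F : Filter ℕ) ≤ classFilter F₀ := by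
  constructor
  · rintro ⟨h1, h2⟩ B ⟨A, hA, hc, hs⟩
    have hU : {y | ∃ x ∈ A, x ∣ y} ∈ F := by
      have hm : {y | ∃ x ∈ A, x ∣ y} ∈ F₀ :=
        Filter.mem_of_superset hA fun x hx => ⟨x, hx, dvd_rfl⟩
      exact h2 _ hm (Ultrafilter.nonempty_of_mem hm) fun a ⟨x, hx, hxa⟩ b hab => ⟨x, hx, hxa.trans hab⟩
    have hD : {y | ∃ z ∈ A, y ∣ z} ∈ F := by
      by_contra hn
      have hn' := Ultrafilter.compl_mem_iff_notMem.2 hn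
      have h0 := h1 _ hn' (Ultrafilter.nonempty_of_mem hn')
        fun a ha b hab ⟨z, hz, hbz⟩ => ha ⟨z, hz, hab.trans hbz⟩
      exact Ultrafilter.compl_mem_iff_notMem.1 h0
        (Filter.mem_of_superset hA fun x hx => ⟨x, hx, dvd_rfl⟩)
    refine Filter.mem_of_superset (Filter.inter_mem hU hD) ?_
    rintro y ⟨⟨x, hx, hxy⟩, z, hz, hyz⟩
    exact hs (hc x hx z hz y hxy hyz)
  · intro h
    refine ⟨fun A hA _ hup => ?_, fun A hA _ hup =>
      h ((dvdConvex_of_upper hup).mem_classFilter hA)⟩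
    by_contra hn
    exact Ultrafilter.compl_mem_iff_notMem.1
      (h ((dvdConvex_compl_of_upper hup).mem_classFilter
        (Ultrafilter.compl_mem_iff_notMem.2 hn))) hA

lemma exists_ufEq_iff {F₀ : Ultrafilter ℕ} {R : Set ℕ} :
    (∃ F : Ultrafilter ℕ, UfEq F F₀ ∧ R ∈ F) ↔ ∃ᶠ x in classFilter F₀, x ∈ R := by
  constructor
  · rintro ⟨F, hF, hR⟩
    have hf : ∃ᶠ x in (F : Filter ℕ), x ∈ R := Filter.Eventually.frequently hR
    exact hf.filter_mono (ufEq_iff.1 hF)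
  · intro h
    have := Filter.frequently_mem_iff_neBot.1 h
    have hle := Ultrafilter.of_le (classFilter F₀ ⊓ Filter.principal R)
    exact ⟨Ultrafilter.of _, ufEq_iff.2 (hle.trans inf_le_left),
      Filter.le_principal_iff.1 (hle.trans inf_le_right)⟩

/-- The members of a convex `A ∈ F₀` that divide a member of `A` satisfying a frequent property `P`
again form a convex member of `F₀`. Otherwise the members of `A` outside the downward closure of
`A ∩ P` would form a convex member of `F₀` disjoint from `P`. -/
lemma dvdConvex_below {F₀ : Ultrafilter ℕ} {P : ℕ → Prop} (hP : ∃ᶠ x in classFilter F₀, P x)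
    {A : Set ℕ} (hA : A ∈ F₀) (hc : DvdConvex A) :
    {x | x ∈ A ∧ ∃ y ∈ A, x ∣ y ∧ P y} ∈ F₀ ∧
      DvdConvex {x | x ∈ A ∧ ∃ y ∈ A, x ∣ y ∧ P y} := by
  constructor
  · by_contra hn
    have hmem : A ∩ {x | ∃ y ∈ A, x ∣ y ∧ P y}ᶜ ∈ F₀ := by
      filter_upwards [hA, Ultrafilter.compl_mem_iff_notMem.2 hn] with x hx hx'
      exact ⟨hx, fun h => hx' ⟨hx, h⟩⟩
    have hcv : DvdConvex (A ∩ {x | ∃ y ∈ A, x ∣ y ∧ P y}ᶜ) := by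
      rintro x ⟨hx, hx'⟩ z ⟨hz, hz'⟩ y hxy hyz
      exact ⟨hc x hx z hz y hxy hyz,
        fun ⟨w, hw, hyw, hPw⟩ => hx' ⟨w, hw, hxy.trans hyw, hPw⟩⟩
    obtain ⟨x, hPx, hx, hx'⟩ := (hP.and_eventually (hcv.mem_classFilter hmem)).exists
    exact hx' ⟨x, hx, dvd_rfl, hPx⟩
  · rintro x ⟨hx, -⟩ z ⟨hz, w, hw, hzw, hPw⟩ y hxy hyz
    exact ⟨hc x hx z hz y hxy hyz, w, hw, hyz.trans hzw, hPw⟩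

/-- The residues modulo `p` realized in the `=~`-class of `F₀`, as elements of `ZMod p`. -/
def classResidues (p : ℕ) (F₀ : Ultrafilter ℕ) : Set (ZMod p) :=
  {u | ∃ᶠ x : ℕ in classFilter F₀, (x : ZMod p) = u}

/-- Realized residues are closed under `(a, b, c) ↦ b * c / a`. -/
lemma classResidues_mul_div {p : ℕ} [Fact p.Prime] {F₀ : Ultrafilter ℕ} {a b c : ZMod p}
    (ha : a ∈ classResidues p F₀) (hb : b ∈ classResidues p F₀) (hc : c ∈ classResidues p F₀)
    (ha0 : a ≠ 0) : b * c / a ∈ classResidues p F₀ := by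
  refine Filter.frequently_iff.2 fun {B} ⟨A, hA, hcA, hAB⟩ => ?_
  obtain ⟨h1, hc1⟩ := dvdConvex_below hc hA hcA
  obtain ⟨h2, hc2⟩ := dvdConvex_below ha h1 hc1
  obtain ⟨x₁, hr1, ⟨hx₁, -⟩, x₂, ⟨-, x₃, hx₃, h23, hr3⟩, h12, hr2⟩ :=
    (hb.and_eventually (hc2.mem_classFilter h2)).exists
  obtain ⟨q, rfl⟩ := h23
  refine ⟨x₁ * q, hAB (hcA x₁ hx₁ _ hx₃ _ (dvd_mul_right _ _) (mul_dvd_mul_right h12 q)), ?_⟩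
  rw [eq_div_iff ha0, ← hr1, ← hr3, ← hr2]
  push_cast
  ring

lemma classResidues_nonempty {p : ℕ} [NeZero p] (F₀ : Ultrafilter ℕ) :
    (classResidues p F₀).Nonempty := by
  by_contra hn
  have hall : ∀ u : ZMod p, ∀ᶠ x : ℕ in classFilter F₀, (x : ZMod p) ≠ u := fun u =>
    Filter.not_frequently.1 fun h => hn ⟨u, h⟩
  obtain ⟨x, hx⟩ := Ultrafilter.nonempty_of_mem (le_classFilter F₀ (Filter.eventually_all.2 hall))
  exact hx _ rfl

/-- Divisibility by `p` is an upward closed condition, so it is constant on a `=~`-class. -/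
lemma classResidues_zero_or (p : ℕ) (F₀ : Ultrafilter ℕ) :
    (∀ u ∈ classResidues p F₀, u = 0) ∨ ∀ u ∈ classResidues p F₀, u ≠ 0 := by
  have hup : ∀ a ∈ {x : ℕ | p ∣ x}, ∀ b, a ∣ b → b ∈ {x : ℕ | p ∣ x} :=
    fun a ha b hab => dvd_trans ha hab
  rcases Ultrafilter.mem_or_compl_mem F₀ {x : ℕ | p ∣ x} with h | h
  · left
    intro u hu
    obtain ⟨x, hx, hp⟩ := (hu.and_eventually ((dvdConvex_of_upper hup).mem_classFilter h)).exists
    rw [← hx]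
    exact (ZMod.natCast_eq_zero_iff x p).2 hp
  · right
    intro u hu h0
    obtain ⟨x, hx, hp⟩ :=
      (hu.and_eventually ((dvdConvex_compl_of_upper hup).mem_classFilter h)).exists
    exact hp ((ZMod.natCast_eq_zero_iff x p).1 (hx.trans h0))

lemma classResidues_geometric (p : ℕ) [Fact p.Prime] (F₀ : Ultrafilter ℕ) :
    ∃ s r : ZMod p, r ≠ 0 ∧ ∀ u, u ∈ classResidues p F₀ ↔ ∃ k : ℕ, u = s * r ^ k := by
  obtain ⟨a, ha⟩ := classResidues_nonempty (p := p) F₀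
  rcases classResidues_zero_or p F₀ with h | h
  · obtain rfl := h a ha
    exact ⟨0, 1, one_ne_zero, fun u => ⟨fun hu => ⟨0, by simp [h u hu]⟩,
      fun ⟨k, hk⟩ => by simpa [hk] using ha⟩⟩
  · have ha0 := h a ha
    let H : Subgroup (ZMod p)ˣ :=
      { carrier := {g | a * g ∈ classResidues p F₀}
        one_mem' := by simpa using ha
        mul_mem' := fun {g g'} hg hg' => by
          have := classResidues_mul_div ha hg hg' ha0
          have e : a * (g : ZMod p) * (a * g') / a = a * ((g * g' : (ZMod p)ˣ) : ZMod p) := by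
            push_cast
            field_simp
          rwa [e] at this
        inv_mem' := fun {g} hg => by
          have := classResidues_mul_div hg ha ha (h _ hg)
          have e : a * a / (a * (g : ZMod p)) = a * ((g⁻¹ : (ZMod p)ˣ) : ZMod p) := by
            have := g.ne_zero
            push_cast
            field_simp
          rwa [e] at this }
    obtain ⟨g, hg⟩ := Subgroup.isCyclic_iff_exists_zpowers_eq_top H |>.1 inferInstance
    refine ⟨a, g, g.ne_zero, fun u => ⟨fun hu => ?_, ?_⟩⟩
    · have hua : u / a ≠ 0 := div_ne_zero (h u hu) ha0
      have hm : Units.mk0 (u / a) hua ∈ H := by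
        change a * (u / a) ∈ classResidues p F₀
        rwa [mul_div_cancel₀ u ha0]
      rw [← hg, ← mem_powers_iff_mem_zpowers] at hm
      obtain ⟨k, hk⟩ := hm
      refine ⟨k, ?_⟩
      have hk' : (g : ZMod p) ^ k = u / a := by simpa using congrArg Units.val hk
      rw [hk', mul_div_cancel₀ u ha0]
    · rintro ⟨k, rfl⟩
      have hgH : g ∈ H := hg ▸ Subgroup.mem_zpowers g
      have : a * ((g ^ k : (ZMod p)ˣ) : ZMod p) ∈ classResidues p F₀ := H.pow_mem hgH k
      simpa using this

/-- For a prime `p` and an ultrafilter `F₀` on ℕ, the set of residues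
modulo `p` realized by the ultrafilters in the `=~`-equivalence class of `F₀` is a
geometric set of residues modulo `p`. -/
theorem residue_set_of_class_is_geometric (p : ℕ) (hp : p.Prime) (F₀ : Ultrafilter ℕ) :
    IsGeometricResidueSet p
      {t : ℕ | t < p ∧ ∃ F : Ultrafilter ℕ, UfEq F F₀ ∧ {x : ℕ | x ≡ t [MOD p]} ∈ F} := by
  have : Fact p.Prime := ⟨hp⟩
  obtain ⟨s, r, hr, hS⟩ := classResidues_geometric p F₀
  refine ⟨s.val, r.val, s.val_lt, Nat.pos_of_ne_zero fun h => hr ((ZMod.val_eq_zero r).1 h),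
    r.val_lt, ?_⟩
  ext t
  have h1 : (∃ F : Ultrafilter ℕ, UfEq F F₀ ∧ {x : ℕ | x ≡ t [MOD p]} ∈ F) ↔
      ∃ k : ℕ, (t : ZMod p) = s * r ^ k := by
    rw [exists_ufEq_iff, ← hS]
    simp only [classResidues, Set.mem_ofPred_eq, ZMod.natCast_eq_natCast_iff]
  have h2 : ∀ k : ℕ, (t : ZMod p) = s * r ^ k ↔ t ≡ s.val * r.val ^ k [MOD p] := fun k => by
    rw [← ZMod.natCast_eq_natCast_iff]
    simp
  simp only [Set.mem_ofPred_eq, h1, h2]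
  constructor
  · rintro ⟨ht, k, hk⟩
    exact ⟨k, (Nat.mod_eq_of_lt ht).symm.trans hk⟩
  · rintro ⟨k, rfl⟩
    exact ⟨Nat.mod_lt _ hp.pos, k, Nat.mod_modEq _ _⟩
end

section
/- Let m ≥ 2 and let r satisfy 0 < r < m and gcd(m, r) = 1. Then there exists an ultrafilter F on ℕ such that: (i) {x ∈ ℕ : x ≡ r (mod m)} ∈ F; (ii) nℕ ∉ F for every n ≥ 2; and (iii) every set A ⊆ ℕ that is nonempty, upward closed under divisibility, and ℕ-free belongs to F. -/
/-!
An ℕ-free set meets the set of numbers coprime to `N` for every `N > 0`, because an ℕ-free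
ultrafilter avoids the multiples of each of the finitely many primes dividing `N`
(`IsNFreeSet.exists_coprime`). Sets that are upward closed under divisibility and have this
property (`IsCoprimeRich`) are closed under binary intersection, since products of elements
coprime to `N` are coprime to `N`. So, together with the residue class of `r` and the sets of
numbers coprime to `N`, they generate a filter (`residueFilter`). This filter is proper: given
`a ∈ A` coprime to `m * N`, the unit `r * a⁻¹` of `ZMod m` lifts to a unit `b` of `ZMod (m * N)`,
and `a * b` lies in `A`, is coprime to `N` and is congruent to `r`. Any ultrafilter extending it
is as required.
-/

/-- An ultrafilter on ℕ is ℕ-free if it contains no set `nℕ` of multiples of `n`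
for `n ≥ 2`. -/
def IsNFreeUltrafilter (G : Ultrafilter ℕ) : Prop :=
  ∀ n : ℕ, 2 ≤ n → {x : ℕ | n ∣ x} ∉ G

/-- A set `A ⊆ ℕ` is ℕ-free if it belongs to some ℕ-free ultrafilter. -/
def IsNFreeSet (A : Set ℕ) : Prop :=
  ∃ G : Ultrafilter ℕ, IsNFreeUltrafilter G ∧ A ∈ G

/-- Upward closed under divisibility, and containing elements coprime to any prescribed `N > 0`. -/
def IsCoprimeRich (A : Set ℕ) : Prop :=
  (∀ a ∈ A, ∀ b, a ∣ b → b ∈ A) ∧ ∀ N : ℕ, 0 < N → ∃ a ∈ A, Nat.Coprime a N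

lemma IsCoprimeRich.univ : IsCoprimeRich Set.univ :=
  ⟨fun _ _ _ _ => trivial, fun N _ => ⟨1, trivial, Nat.coprime_one_left N⟩⟩

lemma IsCoprimeRich.inter {A B : Set ℕ} (hA : IsCoprimeRich A) (hB : IsCoprimeRich B) :
    IsCoprimeRich (A ∩ B) := by
  refine ⟨fun a ha b hab => ⟨hA.1 a ha.1 b hab, hB.1 a ha.2 b hab⟩, fun N hN => ?_⟩
  obtain ⟨a, ha, haN⟩ := hA.2 N hN
  obtain ⟨b, hb, hbN⟩ := hB.2 N hN
  exact ⟨a * b, ⟨hA.1 a ha _ (dvd_mul_right a b), hB.1 b hb _ (dvd_mul_left b a)⟩,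
    Nat.Coprime.mul_left haN hbN⟩

lemma IsNFreeSet.exists_coprime {A : Set ℕ} (hA : IsNFreeSet A) (N : ℕ) (hN : 0 < N) :
    ∃ a ∈ A, Nat.Coprime a N := by
  obtain ⟨G, hG, hAG⟩ := hA
  have h : (⋂ p ∈ N.primeFactors, {x : ℕ | p ∣ x}ᶜ) ∈ (G : Filter ℕ) := by
    rw [Filter.biInter_finset_mem]
    intro p hp
    exact Ultrafilter.compl_mem_iff_notMem.2 (hG p (Nat.prime_of_mem_primeFactors hp).two_le)
  obtain ⟨a, haA, ha⟩ := G.nonempty_of_mem (Filter.inter_mem hAG h)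
  refine ⟨a, haA, ?_⟩
  by_contra hc
  obtain ⟨p, hp, hpa, hpN⟩ := Nat.Prime.not_coprime_iff_dvd.1 hc
  simp only [Set.mem_iInter] at ha
  exact ha p (Nat.mem_primeFactors.2 ⟨hp, hpN, hN.ne'⟩) hpa

/-- The filter generated by the residue class of `r` modulo `m`, the sets of numbers coprime to
`N` for `N > 0`, and the sets satisfying `IsCoprimeRich`. -/
def residueFilter (m r : ℕ) : Filter ℕ where
  sets := {S | ∃ N : ℕ, 0 < N ∧ ∃ A, IsCoprimeRich A ∧
    ∀ x ∈ A, Nat.Coprime x N → x ≡ r [MOD m] → x ∈ S}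
  univ_sets := ⟨1, one_pos, Set.univ, .univ, fun _ _ _ _ => trivial⟩
  sets_of_superset := by
    rintro S T ⟨N, hN, A, hA, h⟩ hST
    exact ⟨N, hN, A, hA, fun x hx hxN hxr => hST (h x hx hxN hxr)⟩
  inter_sets := by
    rintro S T ⟨N, hN, A, hA, h⟩ ⟨M, hM, B, hB, k⟩
    exact ⟨N * M, Nat.mul_pos hN hM, A ∩ B, hA.inter hB, fun x hx hxN hxr =>
      ⟨h x hx.1 hxN.coprime_mul_right_right hxr, k x hx.2 hxN.coprime_mul_left_right hxr⟩⟩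

/-- A number `a` coprime to `m * N` has a multiple in any reduced residue class modulo `m` that is
still coprime to `N`. -/
lemma exists_mul_modEq_coprime {m r a N : ℕ} (hm : 0 < m) (hN : 0 < N) (hr : Nat.Coprime r m)
    (ha : Nat.Coprime a (m * N)) :
    ∃ b, Nat.Coprime (a * b) N ∧ a * b ≡ r [MOD m] := by
  have : NeZero (m * N) := ⟨(Nat.mul_pos hm hN).ne'⟩
  have ham : Nat.Coprime a m := ha.coprime_mul_right_right
  obtain ⟨v, hv⟩ := ZMod.unitsMap_surjective (dvd_mul_right m N)
    ((ZMod.unitOfCoprime a ham)⁻¹ * ZMod.unitOfCoprime r hr)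
  refine ⟨(v : ZMod (m * N)).val, ?_, ?_⟩
  · exact Nat.Coprime.mul_left ha.coprime_mul_left_right
      (ZMod.val_coe_unit_coprime v).coprime_mul_left_right
  · rw [← ZMod.natCast_eq_natCast_iff]
    have hb : (((v : ZMod (m * N)).val : ℕ) : ZMod m) =
        (((ZMod.unitOfCoprime a ham)⁻¹ * ZMod.unitOfCoprime r hr : (ZMod m)ˣ) : ZMod m) := by
      rw [← hv, ZMod.unitsMap_val, ZMod.natCast_val]
    rw [Nat.cast_mul, hb, ← ZMod.coe_unitOfCoprime a ham, ← Units.val_mul, mul_inv_cancel_left,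
      ZMod.coe_unitOfCoprime]

lemma residueFilter_neBot {m r : ℕ} (hm : 0 < m) (hr : Nat.Coprime r m) :
    (residueFilter m r).NeBot := by
  rw [← Filter.empty_mem_iff_bot.not.trans Filter.neBot_iff.symm]
  rintro ⟨N, hN, A, hA, h⟩
  obtain ⟨a, haA, ha⟩ := hA.2 (m * N) (Nat.mul_pos hm hN)
  obtain ⟨b, hbN, hbr⟩ := exists_mul_modEq_coprime hm hN hr ha
  exact h (a * b) (hA.1 a haA _ (dvd_mul_right a b)) hbN hbr

/-- For `m ≥ 2` and `0 < r < m` with `gcd(m, r) = 1`, there is an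
ℕ-free ultrafilter `F` congruent to `r` modulo `m` containing every nonempty,
upward closed under divisibility, ℕ-free set. -/
theorem exists_NMAX_ultrafilter_with_residue
    (m r : ℕ) (hm : 2 ≤ m) (hr0 : 0 < r) (hrm : r < m) (hgcd : Nat.gcd m r = 1) :
    ∃ F : Ultrafilter ℕ,
      {x : ℕ | x ≡ r [MOD m]} ∈ F ∧
      (∀ n : ℕ, 2 ≤ n → {x : ℕ | n ∣ x} ∉ F) ∧
      (∀ A : Set ℕ, A.Nonempty → (∀ a ∈ A, ∀ b, a ∣ b → b ∈ A) → IsNFreeSet A → A ∈ F) := by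
  have := residueFilter_neBot (m := m) (r := r) (by omega) (Nat.Coprime.symm hgcd)
  have hle := Ultrafilter.of_le (residueFilter m r)
  refine ⟨Ultrafilter.of (residueFilter m r), ?_, fun n hn => ?_, fun A _ hup hA => ?_⟩
  · exact hle ⟨1, one_pos, Set.univ, .univ, fun _ _ _ h => h⟩
  · refine Ultrafilter.compl_mem_iff_notMem.1 (hle ?_)
    refine ⟨n, by omega, Set.univ, .univ, fun x _ hx _ hnx => ?_⟩
    have := Nat.Coprime.eq_one_of_dvd hx.symm hnx
    omega
  · exact hle ⟨1, one_pos, A, ⟨hup, hA.exists_coprime⟩, fun _ hx _ _ => hx⟩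
end

section
/- Let M be an ultrafilter on ℕ and let F, G be ultrafilters on ℤ. Then the following are equivalent: (i) for every A ∈ M, the set {(x, y) ∈ ℤ × ℤ : there exists m ∈ A with (m : ℤ) ∣ (x − y)} belongs to F ⊗ G; (ii) for every B ∈ M that is nonempty and upward closed under divisibility in ℕ (b ∈ B and b ∣ c imply c ∈ B), the set {z ∈ ℤ : there exists b ∈ B with (b : ℤ) ∣ z} belongs to F − G. -/
/-!
Membership of a set `S` in `F - G` unfolds to membership of its preimage under `(x, y) ↦ x - y` in
`F ⊗ G` (`Ultrafilter.mem_sub'_iff`), so both sides speak of the same ultrafilter and differ only in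
the sets `B ∈ M` allowed. The set of multiples of elements of `A` does not change when `A` is
replaced by its upward closure under divisibility, which lies in `M` because it contains `A`; hence
restricting to upward closed sets loses nothing.
-/

/-- The tensor (Fubini) product of two ultrafilters on ℤ:
`S ∈ F ⊗ G ↔ {x | {y | (x, y) ∈ S} ∈ G} ∈ F`. -/
def Ultrafilter.tensor (F G : Ultrafilter ℤ) : Ultrafilter (ℤ × ℤ) :=
  F.bind fun x => G.map fun y => (x, y)

/-- Addition of ultrafilters on ℤ: `A ∈ F + G ↔ {x | {y | x + y ∈ A} ∈ G} ∈ F`. -/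
def Ultrafilter.add' (F G : Ultrafilter ℤ) : Ultrafilter ℤ :=
  F.bind fun x => G.map fun y => x + y

/-- `-G` is the image of `G` under `z ↦ -z`. -/
def Ultrafilter.neg' (G : Ultrafilter ℤ) : Ultrafilter ℤ :=
  G.map fun z => -z

/-- `F - G := F + (-G)`. -/
def Ultrafilter.sub' (F G : Ultrafilter ℤ) : Ultrafilter ℤ :=
  F.add' G.neg'

/-- `F - G` is the image of `F ⊗ G` under subtraction. -/
theorem Ultrafilter.mem_sub'_iff (F G : Ultrafilter ℤ) (S : Set ℤ) :
    S ∈ F.sub' G ↔ {q : ℤ × ℤ | q.1 - q.2 ∈ S} ∈ F.tensor G :=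
  Iff.rfl

/-- `F ≡_M G` (every `A ∈ M` yields
`{(x, y) : ∃ m ∈ A, m ∣ x - y} ∈ F ⊗ G`) holds iff `M ∣~ F - G` (every nonempty, upward
closed `B ∈ M` yields `{z : ∃ b ∈ B, b ∣ z} ∈ F - G`). -/
theorem congruent_mod_ultrafilter_iff_dvd_sub
    (M : Ultrafilter ℕ) (F G : Ultrafilter ℤ) :
    (∀ A : Set ℕ, A ∈ M →
        {q : ℤ × ℤ | ∃ m ∈ A, (m : ℤ) ∣ (q.1 - q.2)} ∈ F.tensor G) ↔
      (∀ B : Set ℕ, B ∈ M → B.Nonempty → (∀ b ∈ B, ∀ c, b ∣ c → c ∈ B) →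
        {z : ℤ | ∃ b ∈ B, (b : ℤ) ∣ z} ∈ F.sub' G) := by
  constructor
  · intro h B hB _ _
    exact (Ultrafilter.mem_sub'_iff F G _).2 (h B hB)
  · intro h A hA
    have hsub : A ⊆ {c : ℕ | ∃ a ∈ A, a ∣ c} := fun a ha => ⟨a, ha, dvd_rfl⟩
    have hB := h {c : ℕ | ∃ a ∈ A, a ∣ c} (Filter.mem_of_superset hA hsub)
      ((Ultrafilter.nonempty_of_mem hA).mono hsub)
      (fun b ⟨a, ha, hab⟩ c hbc => ⟨a, ha, hab.trans hbc⟩)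
    refine Filter.mem_of_superset ((Ultrafilter.mem_sub'_iff F G _).1 hB) ?_
    rintro q ⟨b, ⟨a, ha, hab⟩, hb⟩
    exact ⟨a, ha, (Int.natCast_dvd_natCast.2 hab).trans hb⟩
end

section
/- Let m ≥ 1 and let F, G be ultrafilters on ℤ. Then {(x, y) ∈ ℤ × ℤ : (m : ℤ) ∣ (x − y)} ∈ F ⊗ G if and only if for every r ∈ ℤ, {z ∈ ℤ : z ≡ r (mod m)} ∈ F ↔ {z ∈ ℤ : z ≡ r (mod m)} ∈ G. -/
/-- The residue `a` is the point at which the image of `F` in `ZMod m` is principal. -/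
theorem Ultrafilter.exists_residue {m : ℕ} (hm : 1 ≤ m) (F : Ultrafilter ℤ) :
    ∃ a : ℤ, ∀ r : ℤ, {z : ℤ | z ≡ r [ZMOD (m : ℤ)]} ∈ F ↔ r ≡ a [ZMOD (m : ℤ)] := by
  have : NeZero m := ⟨by omega⟩
  obtain ⟨c, hc⟩ := (F.map (Int.cast : ℤ → ZMod m)).eq_pure_of_finite
  obtain ⟨a, rfl⟩ := ZMod.intCast_surjective c
  refine ⟨a, fun r => ?_⟩
  have h : ({(r : ZMod m)} : Set (ZMod m)) ∈ F.map (Int.cast : ℤ → ZMod m) ↔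
      (r : ZMod m) = a := by
    rw [hc, Ultrafilter.mem_pure, Set.mem_singleton_iff, eq_comm]
  rw [Ultrafilter.mem_map] at h
  rw [← ZMod.intCast_eq_intCast_iff, ← h]
  simp only [← ZMod.intCast_eq_intCast_iff]
  rfl

theorem Ultrafilter.mem_tensor {F G : Ultrafilter ℤ} {S : Set (ℤ × ℤ)} :
    S ∈ F.tensor G ↔ {x | {y | (x, y) ∈ S} ∈ G} ∈ F :=
  Iff.rfl

/-- For `m ≥ 1`, `{(x, y) : m ∣ x - y} ∈ F ⊗ G` iff `F` and `G` contain
exactly the same residue classes modulo `m`. -/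
theorem dvd_sub_mem_tensor_iff_same_residues
    (m : ℕ) (hm : 1 ≤ m) (F G : Ultrafilter ℤ) :
    {q : ℤ × ℤ | (m : ℤ) ∣ (q.1 - q.2)} ∈ F.tensor G ↔
      ∀ r : ℤ, ({z : ℤ | z ≡ r [ZMOD (m : ℤ)]} ∈ F ↔ {z : ℤ | z ≡ r [ZMOD (m : ℤ)]} ∈ G) := by
  obtain ⟨a, ha⟩ := F.exists_residue hm
  obtain ⟨b, hb⟩ := G.exists_residue hm
  have key : {q : ℤ × ℤ | (m : ℤ) ∣ (q.1 - q.2)} ∈ F.tensor G ↔ b ≡ a [ZMOD (m : ℤ)] := by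
    rw [Ultrafilter.mem_tensor]
    simp only [Set.mem_ofPred_eq, ← Int.modEq_iff_dvd, hb, ha]
  rw [key]
  simp only [ha, hb]
  exact ⟨fun h r => ⟨fun hr => hr.trans h.symm, fun hr => hr.trans h⟩,
    fun h => (h b).2 (Int.ModEq.refl b)⟩
end

section
/- There exist ultrafilters F and G on ℕ with F =~ G, a prime p, and residues r₁ ≠ r₂ with 0 ≤ r₁ < p and 0 ≤ r₂ < p, such that {x ∈ ℕ : x ≡ r₁ (mod p)} ∈ F and {x ∈ ℕ : x ≡ r₂ (mod p)} ∈ G; consequently, identifying F and G with their images under the inclusion ℕ → ℤ, the set {z ∈ ℤ : (p : ℤ) ∣ z} does not belong to F − G. -/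
/-- Divisibility between an ultrafilter concentrated on the numbers prime to `3` and one that
contains the multiples of each such number. -/
lemma ufDvd_of_divisible {F G : Ultrafilter ℕ} (hF : {x : ℕ | ¬ 3 ∣ x} ∈ F)
    (hG : ∀ n : ℕ, ¬ 3 ∣ n → {x : ℕ | n ∣ x} ∈ G) : UfDvd F G := by
  intro A hA _ hup
  obtain ⟨n, hnA, hn⟩ := F.nonempty_of_mem (Filter.inter_mem hA hF)
  exact Filter.mem_of_superset (hG n hn) fun b hb => hup n hnA b hb

/-- The largest divisor of `k!` prime to `3`. -/
def factorialPrimeToThree (k : ℕ) : ℕ := ordCompl[3] k.factorial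

lemma not_three_dvd_factorialPrimeToThree (k : ℕ) : ¬ 3 ∣ factorialPrimeToThree k :=
  Nat.not_dvd_ordCompl Nat.prime_three k.factorial_ne_zero

lemma dvd_factorialPrimeToThree {n k : ℕ} (hn : ¬ 3 ∣ n) (hk : n ≤ k) :
    n ∣ factorialPrimeToThree k := by
  have hpos : 0 < n := Nat.pos_of_ne_zero fun h => hn (h ▸ dvd_zero 3)
  have hdvd : n ∣ k.factorial := Nat.dvd_factorial hpos hk
  rw [← Nat.ordProj_mul_ordCompl_eq_self k.factorial 3] at hdvd
  have hcop : Nat.Coprime n (3 ^ k.factorial.factorization 3) :=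
    (((Nat.prime_three.coprime_iff_not_dvd).2 hn).symm).pow_right _
  exact hcop.dvd_of_dvd_mul_left hdvd

lemma sq_factorialPrimeToThree_mod (k : ℕ) : factorialPrimeToThree k ^ 2 % 3 = 1 := by
  have h := not_three_dvd_factorialPrimeToThree k
  have h' : factorialPrimeToThree k % 3 = 1 ∨ factorialPrimeToThree k % 3 = 2 := by omega
  rcases h' with h' | h' <;> simp [Nat.pow_mod, h']

/-- Distinct residues of `F` and `G` modulo `p` prevent `F - G` from containing the multiples
of `p`. -/
lemma multiples_notMem_sub {F G : Ultrafilter ℕ} {p r₁ r₂ : ℕ} (hne : r₁ ≠ r₂) (h₁ : r₁ < p)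
    (h₂ : r₂ < p) (hF : {x : ℕ | x ≡ r₁ [MOD p]} ∈ F) (hG : {x : ℕ | x ≡ r₂ [MOD p]} ∈ G) :
    {z : ℤ | (p : ℤ) ∣ z} ∉
      (F.map fun n : ℕ => (n : ℤ)).sub' (G.map fun n : ℕ => (n : ℤ)) := by
  intro h
  have h' : {x : ℕ | {y : ℕ | (p : ℤ) ∣ (x : ℤ) + -(y : ℤ)} ∈ G} ∈ F := h
  obtain ⟨x, hx, hxr⟩ := F.nonempty_of_mem (Filter.inter_mem h' hF)
  obtain ⟨y, hy, hyr⟩ := G.nonempty_of_mem (Filter.inter_mem hx hG)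
  have hyx : y ≡ x [MOD p] := (Nat.modEq_iff_dvd).2 (by simpa [sub_eq_add_neg] using hy)
  have hr : r₁ ≡ r₂ [MOD p] := (hxr.symm.trans hyx.symm).trans hyr
  exact hne (hr.eq_of_lt_of_lt h₁ h₂)

/-- There are `=~`-equivalent ultrafilters `F, G` on ℕ having different
residues `r₁ ≠ r₂` modulo some prime `p`; consequently (viewing them in ℤ via the
inclusion ℕ → ℤ) the set of multiples of `p` does not belong to `F - G`. -/
theorem exists_equiv_ultrafilters_different_residues :
    ∃ (F G : Ultrafilter ℕ) (p r₁ r₂ : ℕ),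
      p.Prime ∧ UfEq F G ∧ r₁ ≠ r₂ ∧ r₁ < p ∧ r₂ < p ∧
      {x : ℕ | x ≡ r₁ [MOD p]} ∈ F ∧ {x : ℕ | x ≡ r₂ [MOD p]} ∈ G ∧
      {z : ℤ | (p : ℤ) ∣ z} ∉
        (F.map fun n : ℕ => (n : ℤ)).sub' (G.map fun n : ℕ => (n : ℤ)) := by
  let U : Ultrafilter ℕ := Filter.hyperfilter ℕ
  have hU : ∀ n : ℕ, {k : ℕ | n ≤ k} ∈ U := fun n =>
    Nat.hyperfilter_le_atTop (Filter.mem_atTop n)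
  let F : Ultrafilter ℕ := U.map fun k => factorialPrimeToThree k ^ 2
  let G : Ultrafilter ℕ := U.map fun k => 2 * factorialPrimeToThree k ^ 2
  have hF : {x : ℕ | x ≡ 1 [MOD 3]} ∈ F :=
    Filter.mem_map.2 (Filter.univ_mem' fun k => sq_factorialPrimeToThree_mod k)
  have hG : {x : ℕ | x ≡ 2 [MOD 3]} ∈ G :=
    Filter.mem_map.2 (Filter.univ_mem' fun k => by
      have := sq_factorialPrimeToThree_mod k
      change 2 * factorialPrimeToThree k ^ 2 % 3 = 2 % 3
      omega)
  have hF₃ : {x : ℕ | ¬ 3 ∣ x} ∈ F := Filter.mem_of_superset hF fun x (hx : x % 3 = 1 % 3) => by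
    change ¬ 3 ∣ x
    omega
  have hG₃ : {x : ℕ | ¬ 3 ∣ x} ∈ G := Filter.mem_of_superset hG fun x (hx : x % 3 = 2 % 3) => by
    change ¬ 3 ∣ x
    omega
  have hFd : ∀ n : ℕ, ¬ 3 ∣ n → {x : ℕ | n ∣ x} ∈ F := fun n hn =>
    Filter.mem_map.2 (Filter.mem_of_superset (hU n) fun k hk =>
      dvd_pow (dvd_factorialPrimeToThree hn hk) two_ne_zero)
  have hGd : ∀ n : ℕ, ¬ 3 ∣ n → {x : ℕ | n ∣ x} ∈ G := fun n hn =>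
    Filter.mem_map.2 (Filter.mem_of_superset (hU n) fun k hk =>
      (dvd_pow (dvd_factorialPrimeToThree hn hk) two_ne_zero).mul_left 2)
  exact ⟨F, G, 3, 1, 2, Nat.prime_three,
    ⟨ufDvd_of_divisible hF₃ hGd, ufDvd_of_divisible hG₃ hFd⟩, by norm_num, by norm_num,
    by norm_num, hF, hG, multiples_notMem_sub (by norm_num) (by norm_num) (by norm_num) hF hG⟩
end
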